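/- Let ε ∈ (0, π/6) and let G = (V,E) be an ε-regular graph. If θ_ex(γ) < π/2 − ε for every straight path γ of G, then #S^⊥(s) = l(s) for every stratum s ∈ S(G). -/

import Mathlib

open scoped Real

noncomputable section

abbrev Pt : Type := EuclideanSpace ℝ (Fin 2)

/-- The clockwise angle in `[0, 2π)` between the vectors `u` and `v`. -/
noncomputable def cwAngle (u v : Pt) : ℝ :=
  let a := Complex.arg ((⟨u 0, u 1⟩ : ℂ) * (starRingEnd ℂ) (⟨v 0, v 1⟩ : ℂ))
  if a < 0 then a + 2 * π else a

/-- A graph with finitely many vertices in the plane and unordered pairs of distinct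
vertices as edges. -/
structure BondGraph where
  V : Set Pt
  finV : V.Finite
  E : Set (Sym2 Pt)
  not_diag : ∀ e ∈ E, ¬ e.IsDiag
  mem_V : ∀ e ∈ E, ∀ x ∈ e, x ∈ V

/-- The neighborhood `N(x, E)`. -/
def nbhd (G : BondGraph) (x : Pt) : Set Pt := {y | s(x, y) ∈ G.E}

/-- The degree `#N(x, E)`. -/
noncomputable def deg (G : BondGraph) (x : Pt) : ℕ := (nbhd G x).ncard

/-- The bond energy `F_bond(G) = Σ_{x ∈ V} (4 − #N(x,E))`. -/
noncomputable def Fbond (G : BondGraph) : ℤ := ∑ᶠ x ∈ G.V, ((4 : ℤ) - (deg G x : ℤ))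

def goodAngles (ε : ℝ) : Set ℝ :=
  Set.Icc (π / 2 - ε) (π / 2 + ε) ∪ Set.Icc (π - ε) (π + ε) ∪
    Set.Icc (3 * π / 2 - ε) (3 * π / 2 + ε)

/-- `ε`-regularity of a graph. -/
def EpsRegular (ε : ℝ) (G : BondGraph) : Prop :=
  (∀ x y : Pt, s(x, y) ∈ G.E → 1 - ε ≤ dist x y) ∧
  (∀ x y z : Pt, s(x, y) ∈ G.E → s(z, y) ∈ G.E → x ≠ z →
    cwAngle (x - y) (z - y) ∈ goodAngles ε)

/-- The `i`-th vertex of a path (with junk value `0` out of range). -/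
def nth (γ : List Pt) (i : ℕ) : Pt := γ.getD i 0

/-- The interior angle `θ_{i+2} = θ_{x_{i+2}, x_{i+1}, x_i}` of a path (`0`-based). -/
noncomputable def pathAngle (γ : List Pt) (i : ℕ) : ℝ :=
  cwAngle (nth γ (i + 2) - nth γ (i + 1)) (nth γ i - nth γ (i + 1))

/-- The list of (unordered) edges of a path. -/
def pathEdges (γ : List Pt) : List (Sym2 Pt) := (γ.zip γ.tail).map (fun p => s(p.1, p.2))

/-- A straight path of the graph `G`. -/
def IsStraightPath (ε : ℝ) (G : BondGraph) (γ : List Pt) : Prop :=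
  2 ≤ γ.length ∧
  (∀ x ∈ γ, x ∈ G.V) ∧
  γ.Chain' (fun a b => s(a, b) ∈ G.E) ∧
  (∀ i : ℕ, i + 2 < γ.length → pathAngle γ i ∈ Set.Icc (π - ε) (π + ε)) ∧
  (pathEdges γ).Nodup

/-- A path is closed if its first and last points coincide. -/
def IsClosedPath (γ : List Pt) : Prop := γ.head? = γ.getLast?

/-- The angle excess `θ_ex(γ)` of a path. -/
noncomputable def thetaEx (γ : List Pt) : ℝ :=
  ∑ i ∈ Finset.range (γ.length - 2), |pathAngle γ i - π|

/-- Two lists are identified if they agree up to reversal. -/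
def revSetoid : Setoid (List Pt) where
  r a b := a = b ∨ a = b.reverse
  iseqv := by
    constructor
    · intro a; exact Or.inl rfl
    · intro a b h
      rcases h with h | h
      · exact Or.inl h.symm
      · right; rw [h, List.reverse_reverse]
    · intro a b c hab hbc
      rcases hab with h | h <;> rcases hbc with h' | h' <;>
        simp [h, h', List.reverse_reverse]

/-- An (undirected) stratum: a list of points up to reversal. -/
def Stratum : Type := Quotient revSetoid

/-- The length `l(s)` of a stratum. -/
def Stratum.len : Stratum → ℕ :=
  Quotient.lift List.length (by rintro a b (rfl | rfl) <;> simp)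

/-- The set of vertices of a stratum. -/
def Stratum.verts : Stratum → Set Pt :=
  Quotient.lift (fun l => {x : Pt | x ∈ l}) (by
    rintro a b (rfl | rfl)
    · rfl
    · ext x; simp)

/-- `γ` is a subpath of `γ'`, up to reversal. -/
def SubPathUpToRev (γ γ' : List Pt) : Prop := γ <:+: γ' ∨ γ <:+: γ'.reverse

/-- A maximal straight path (maximal with respect to inclusion). -/
def IsMaximalStraight (ε : ℝ) (G : BondGraph) (γ : List Pt) : Prop :=
  IsStraightPath ε G γ ∧
    ∀ γ' : List Pt, IsStraightPath ε G γ' → SubPathUpToRev γ γ' →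
      (γ' = γ ∨ γ' = γ.reverse)

/-- `x ∈ V₂^π`: a vertex of degree two whose bond angle lies in `[π−ε, π+ε]`. -/
def V2pi (ε : ℝ) (G : BondGraph) (x : Pt) : Prop :=
  x ∈ G.V ∧ ∃ x₁ x₂ : Pt, x₁ ≠ x₂ ∧ nbhd G x = {x₁, x₂} ∧
    cwAngle (x₁ - x) (x₂ - x) ∈ Set.Icc (π - ε) (π + ε)

/-- The set of strata `S(G)`: maximal straight paths, together with the degenerate
one-point stratum `(x)` counted twice for `x ∈ V₀` and once for `x ∈ V₁ ∪ V₂^π`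
(the `Fin 2` tag realizes the multiplicity). -/
def strataSet (ε : ℝ) (G : BondGraph) : Set (Stratum × Fin 2) :=
  {p | ∃ γ : List Pt, IsMaximalStraight ε G γ ∧ p = (Quotient.mk revSetoid γ, 0)}
  ∪ {p | ∃ x ∈ G.V, deg G x = 0 ∧
      (p = (Quotient.mk revSetoid [x], 0) ∨ p = (Quotient.mk revSetoid [x], 1))}
  ∪ {p | ∃ x ∈ G.V, (deg G x = 1 ∨ V2pi ε G x) ∧ p = (Quotient.mk revSetoid [x], 0)}

/-- The set of orthogonal strata `S^⊥(s)`. -/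
def orthStrata (ε : ℝ) (G : BondGraph) (s : Stratum × Fin 2) : Set (Stratum × Fin 2) :=
  {s' | s' ∈ strataSet ε G ∧ s' ≠ s ∧ (Stratum.verts s.1 ∩ Stratum.verts s'.1).Nonempty}

/-!
Write the bond angle at an interior vertex of a path as `π` minus the turning angle. The angle
excess is then the total turning of the path, and it bounds the sum of the two angles which a chord
of the path makes with its end bonds. If two strata met in two different vertices, this bound would
apply to both of them with the same chord; their bonds at one end of the chord would then enclose an
angle below `π / 2 - ε` and hence coincide, and bonds continue straight in at most one way, so the
strata would be equal. The same bound shows that a straight path never returns to a vertex.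

Three bonds at a vertex which pairwise enclose angles close to `π / 2` would be linearly
independent, because their normalized Gram matrix is diagonally dominant. So the bonds at a vertex
form at most two classes of equal or opposite bonds, each class lies on one maximal straight path,
and the degenerate strata make up for missing classes: every vertex lies on exactly two strata.
Mapping a vertex of `s` to its other stratum is therefore a bijection from `s` onto `S^⊥(s)`.
-/

open InnerProductGeometry

/-! ### Turning angles and almost orthogonal vectors -/

section Geometry

variable {V : Type*} [NormedAddCommGroup V] [InnerProductSpace ℝ V]

theorem angle_sub_sub_rev (a b c d : V) : angle (a - b) (c - d) = angle (d - c) (b - a) := by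
  rw [angle_comm, ← angle_neg_neg, neg_sub, neg_sub]

theorem angle_sum_add_angle_sum_le_sum_angle {e : ℕ → V} {n : ℕ} (he : ∀ i ≤ n, e i ≠ 0) :
    angle (e 0) (∑ i ∈ Finset.range (n + 1), e i) +
        angle (∑ i ∈ Finset.range (n + 1), e i) (e n) ≤
      ∑ i ∈ Finset.range n, angle (e i) (e (i + 1)) := by
  induction n with
  | zero => simp [he 0 le_rfl]
  | succ n ih =>
    rw [Finset.sum_range_succ e (n + 1), Finset.sum_range_succ (fun i => angle (e i) (e (i + 1))) n]
    set S := ∑ i ∈ Finset.range (n + 1), e i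
    have hsplit : angle S (S + e (n + 1)) + angle (S + e (n + 1)) (e (n + 1)) =
        angle S (e (n + 1)) := by
      rw [angle_comm (S + e (n + 1)), ← angle_eq_angle_add_add_angle_add S (he (n + 1) le_rfl)]
    linarith [ih fun i hi => he i (hi.trans n.le_succ),
      angle_le_angle_add_angle (e 0) S (S + e (n + 1)),
      angle_le_angle_add_angle S (e n) (e (n + 1))]

theorem angle_chord_add_angle_chord_le_sum_angle {x : ℕ → V} {i j : ℕ} (hij : i ≤ j)
    (hx : ∀ k, i ≤ k → k ≤ j → x k ≠ x (k + 1)) :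
    angle (x (i + 1) - x i) (x (j + 1) - x i) + angle (x (j + 1) - x i) (x (j + 1) - x j) ≤
      ∑ k ∈ Finset.Ico i j, angle (x (k + 1) - x k) (x (k + 2) - x (k + 1)) := by
  obtain ⟨n, rfl⟩ := Nat.exists_eq_add_of_le hij
  have h := angle_sum_add_angle_sum_le_sum_angle (e := fun k => x (i + (k + 1)) - x (i + k))
    (n := n) fun k hk => sub_ne_zero.mpr (hx _ (i.le_add_right k) (by omega)).symm
  rw [Finset.sum_range_sub (fun k => x (i + k))] at h
  simpa [Finset.sum_Ico_eq_sum_range, add_assoc] using h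

theorem abs_cos_lt_half {θ : ℝ} (h : |θ - π / 2| < π / 6) : |Real.cos θ| < 1 / 2 := by
  obtain ⟨h₁, h₂⟩ := abs_lt.mp h
  rw [← Real.sin_pi_div_two_sub, ← Real.sin_pi_div_six, abs_lt, ← Real.sin_neg]
  constructor <;> refine Real.sin_lt_sin_of_lt_of_le_pi_div_two ?_ ?_ ?_ <;> linarith

theorem linearIndependent_of_sum_abs_cos_angle_lt_one {ι : Type*} [Fintype ι] [DecidableEq ι]
    {v : ι → V} (hv : ∀ i, v i ≠ 0)
    (hcos : ∀ i, ∑ j ∈ Finset.univ.erase i, |Real.cos (angle (v i) (v j))| < 1) :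
    LinearIndependent ℝ v := by
  have hgram : Matrix.gram ℝ (fun i => ‖v i‖⁻¹ • v i) =
      Matrix.of fun i j => Real.cos (angle (v i) (v j)) := by
    ext i j
    rw [Matrix.gram_apply, Matrix.of_apply, real_inner_smul_left, real_inner_smul_right, cos_angle]
    field_simp
  have hdet : (Matrix.gram ℝ (fun i => ‖v i‖⁻¹ • v i)).det ≠ 0 := by
    rw [hgram]
    refine det_ne_zero_of_sum_row_lt_diag fun i => ?_
    simpa only [Matrix.of_apply, Real.norm_eq_abs, angle_self (hv i), Real.cos_zero, abs_one]
      using hcos i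
  have hunit (i : ι) : ‖v i‖⁻¹ ≠ 0 := inv_ne_zero (norm_ne_zero_iff.mpr (hv i))
  exact (LinearIndependent.units_smul_iff v fun i => Units.mk0 _ (hunit i)).mp
    (Matrix.linearIndependent_of_det_gram_ne_zero hdet)

theorem linearIndependent_of_abs_angle_sub_pi_div_two_lt {v : Fin 3 → V} (hv : ∀ i, v i ≠ 0)
    (h : ∀ i j, i ≠ j → |angle (v i) (v j) - π / 2| < π / 6) : LinearIndependent ℝ v := by
  refine linearIndependent_of_sum_abs_cos_angle_lt_one hv fun i => ?_
  calc ∑ j ∈ Finset.univ.erase i, |Real.cos (angle (v i) (v j))|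
      < ∑ j ∈ Finset.univ.erase i, (1 / 2 : ℝ) :=
        Finset.sum_lt_sum_of_nonempty (Finset.card_pos.mp (by simp)) fun j hj =>
          abs_cos_lt_half (h i j (Finset.ne_of_mem_erase hj).symm)
    _ = 1 := by simp

end Geometry

/-! ### Bonds at a vertex -/

theorem abs_cwAngle_sub_pi {u v : Pt} (hu : u ≠ 0) (hv : v ≠ 0) :
    |cwAngle u v - π| = π - angle u v := by
  let φ : Pt ≃ₗᵢ[ℝ] ℂ := Complex.orthonormalBasisOneI.repr.symm
  have hφ (w : Pt) : (⟨w 0, w 1⟩ : ℂ) = φ w := by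
    simp [φ, Complex.orthonormalBasisOneI_repr_symm_apply, Complex.mk_eq_add_mul_I]
  have hne {w : Pt} (hw : w ≠ 0) : φ w ≠ 0 := by simpa using hw
  set a := Complex.arg (φ u * (starRingEnd ℂ) (φ v)) with ha
  have hangle : angle u v = |a| := by
    rw [← φ.toLinearIsometry.angle_map, LinearIsometryEquiv.coe_toLinearIsometry,
      Complex.angle_eq_abs_arg (hne hu) (hne hv), div_eq_mul_inv,
      Complex.inv_def, ← mul_assoc,
      Complex.arg_mul_real (inv_pos.mpr (Complex.normSq_pos.mpr (hne hv)))]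
  have hcw : cwAngle u v = if a < 0 then a + 2 * π else a := by
    simp only [cwAngle, hφ, ha]
  rw [hcw, hangle]
  have h1 := Complex.neg_pi_lt_arg (φ u * (starRingEnd ℂ) (φ v))
  have h2 := Complex.arg_le_pi (φ u * (starRingEnd ℂ) (φ v))
  split_ifs with h
  · rw [abs_of_neg h, abs_of_pos (by linarith)]
    ring
  · rw [abs_of_nonneg (not_lt.mp h), abs_of_nonpos (by linarith)]
    ring

theorem abs_cwAngle_sub_sub_pi {x y z : Pt} (hxy : x ≠ y) (hzy : z ≠ y) :
    |cwAngle (z - y) (x - y) - π| = angle (y - x) (z - y) := by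
  rw [abs_cwAngle_sub_pi (sub_ne_zero.mpr hzy) (sub_ne_zero.mpr hxy), angle_comm,
    ← angle_neg_left, neg_sub]

theorem BondGraph.ne_of_mem_E {G : BondGraph} {x y : Pt} (h : s(x, y) ∈ G.E) : x ≠ y :=
  fun hxy => G.not_diag _ h (Sym2.mk_isDiag_iff.mpr hxy)

/-- `x, y, z` are consecutive vertices of a straight path: the bonds `{x, y}` and `{y, z}` form an
interior angle in `[π - ε, π + ε]`, expressed here through the turning angle at `y`. -/
def IsStraight (ε : ℝ) (G : BondGraph) (x y z : Pt) : Prop :=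
  s(x, y) ∈ G.E ∧ s(y, z) ∈ G.E ∧ angle (y - x) (z - y) ≤ ε

/-- The bonds `{x, y}` and `{x, z}` agree or continue each other straight through `x`. -/
def Aligned (ε : ℝ) (G : BondGraph) (x y z : Pt) : Prop := y = z ∨ IsStraight ε G y x z

/-- The bond angle condition (ii) in the definition of `ε`-regularity. -/
def HasGoodAngles (ε : ℝ) (G : BondGraph) : Prop :=
  ∀ x y z : Pt, s(x, y) ∈ G.E → s(z, y) ∈ G.E → x ≠ z → cwAngle (x - y) (z - y) ∈ goodAngles ε

section Bonds

variable {ε : ℝ} {G : BondGraph} {x y z : Pt}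

theorem isStraight_iff_cwAngle_mem (hxy : s(x, y) ∈ G.E) (hyz : s(y, z) ∈ G.E) :
    IsStraight ε G x y z ↔ cwAngle (z - y) (x - y) ∈ Set.Icc (π - ε) (π + ε) := by
  rw [← Set.mem_Icc_iff_abs_le, abs_sub_comm,
    abs_cwAngle_sub_sub_pi (G.ne_of_mem_E hxy) (G.ne_of_mem_E hyz).symm]
  exact ⟨fun h => h.2.2, fun h => ⟨hxy, hyz, h⟩⟩

theorem IsStraight.symm (h : IsStraight ε G x y z) : IsStraight ε G z y x :=
  ⟨Sym2.eq_swap ▸ h.2.1, Sym2.eq_swap ▸ h.1, angle_sub_sub_rev y x z y ▸ h.2.2⟩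

theorem IsStraight.ne (hε : ε < π) (h : IsStraight ε G x y z) : x ≠ z := by
  rintro rfl
  have hangle : angle (y - x) (x - y) = π := by
    rw [← neg_sub y x, angle_self_neg_of_nonzero (sub_ne_zero.mpr (G.ne_of_mem_E h.2.1))]
  linarith [h.2.2]

theorem HasGoodAngles.abs_angle_sub_pi_div_two_le (hG : HasGoodAngles ε G) (hxy : s(x, y) ∈ G.E)
    (hxz : s(x, z) ∈ G.E) (hyz : ¬ Aligned ε G x y z) :
    |angle (y - x) (z - x) - π / 2| ≤ ε := by
  rw [Aligned, not_or] at hyz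
  have hyx : s(y, x) ∈ G.E := Sym2.eq_swap ▸ hxy
  have hgood := hG z x y (Sym2.eq_swap ▸ hxz) hyx (Ne.symm hyz.1)
  have habs := abs_cwAngle_sub_pi (sub_ne_zero.mpr (G.ne_of_mem_E hxz).symm)
    (sub_ne_zero.mpr (G.ne_of_mem_E hyx))
  rw [angle_comm] at habs
  rcases hgood with (⟨h₁, h₂⟩ | h) | ⟨h₁, h₂⟩
  · rcases abs_cases (cwAngle (z - x) (y - x) - π) with ⟨_, _⟩ | ⟨_, _⟩ <;>
      exact abs_le.mpr ⟨by linarith [Real.pi_pos], by linarith⟩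
  · exact absurd ((isStraight_iff_cwAngle_mem hyx hxz).mpr h) hyz.2
  · rcases abs_cases (cwAngle (z - x) (y - x) - π) with ⟨_, _⟩ | ⟨_, _⟩ <;>
      exact abs_le.mpr ⟨by linarith [Real.pi_pos], by linarith⟩

theorem HasGoodAngles.le_angle (hG : HasGoodAngles ε G) (hxy : s(x, y) ∈ G.E)
    (hxz : s(x, z) ∈ G.E) (hyz : y ≠ z) : π / 2 - ε ≤ angle (y - x) (z - x) := by
  by_cases h : Aligned ε G x y z
  · have hturn := (h.resolve_left hyz).2.2
    rw [← neg_sub y x, angle_neg_left] at hturn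
    linarith [Real.pi_pos]
  · linarith [(abs_le.mp (hG.abs_angle_sub_pi_div_two_le hxy hxz h)).1]

theorem IsStraight.unique (hG : HasGoodAngles ε G) (hε : ε < π / 6) {w : Pt}
    (hz : IsStraight ε G x y z) (hw : IsStraight ε G x y w) : z = w := by
  by_contra hne
  have h := angle_le_angle_add_angle (z - y) (y - x) (w - y)
  rw [angle_comm (z - y) (y - x)] at h
  linarith [hG.le_angle hz.2.1 hw.2.1 hne, hz.2.2, hw.2.2]

theorem Aligned.symm (h : Aligned ε G x y z) : Aligned ε G x z y :=
  h.imp Eq.symm IsStraight.symm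

theorem HasGoodAngles.aligned_or_aligned_or_aligned (hG : HasGoodAngles ε G) (hε : ε < π / 6)
    {y₁ y₂ y₃ : Pt} (h₁ : s(x, y₁) ∈ G.E) (h₂ : s(x, y₂) ∈ G.E) (h₃ : s(x, y₃) ∈ G.E) :
    Aligned ε G x y₁ y₂ ∨ Aligned ε G x y₁ y₃ ∨ Aligned ε G x y₂ y₃ := by
  by_contra! ⟨h₁₂, h₁₃, h₂₃⟩
  let v : Fin 3 → Pt := ![y₁, y₂, y₃]
  have hv (i : Fin 3) : s(x, v i) ∈ G.E := by fin_cases i <;> assumption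
  have hnot (i j : Fin 3) (hij : i ≠ j) : ¬ Aligned ε G x (v i) (v j) := by
    have h₂₁ : ¬ Aligned ε G x y₂ y₁ := mt Aligned.symm h₁₂
    have h₃₁ : ¬ Aligned ε G x y₃ y₁ := mt Aligned.symm h₁₃
    have h₃₂ : ¬ Aligned ε G x y₃ y₂ := mt Aligned.symm h₂₃
    fin_cases i <;> fin_cases j <;> first | exact absurd rfl hij | assumption
  have hindep : LinearIndependent ℝ fun i => v i - x :=
    linearIndependent_of_abs_angle_sub_pi_div_two_lt
      (fun i => sub_ne_zero.mpr (G.ne_of_mem_E (hv i)).symm)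
      fun i j hij => (hG.abs_angle_sub_pi_div_two_le (hv i) (hv j) (hnot i j hij)).trans_lt hε
  simpa using hindep.fintype_card_le_finrank

end Bonds

/-! ### Straight paths -/

section Lists

variable {α : Type*} {l : List α} {x y z : α}

theorem pair_infix_iff_getElem? :
    [x, y] <:+: l ↔ ∃ i, l[i]? = some x ∧ l[i + 1]? = some y := by
  rw [List.infix_iff_getElem?]
  constructor
  · rintro ⟨i, -, h⟩
    exact ⟨i, by simpa using h 0 (by simp), by simpa [add_comm] using h 1 (by simp)⟩
  · rintro ⟨i, hx, hy⟩
    obtain ⟨hi, -⟩ := List.getElem?_eq_some_iff.mp hy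
    refine ⟨i, by change 2 + i ≤ l.length; omega, fun k (hk : k < 2) => ?_⟩
    interval_cases k
    · simpa using hx
    · simpa [add_comm] using hy

theorem triple_infix_iff_getElem? :
    [x, y, z] <:+: l ↔ ∃ i, l[i]? = some x ∧ l[i + 1]? = some y ∧ l[i + 2]? = some z := by
  rw [List.infix_iff_getElem?]
  constructor
  · rintro ⟨i, -, h⟩
    exact ⟨i, by simpa using h 0 (by simp), by simpa [add_comm] using h 1 (by simp),
      by simpa [add_comm] using h 2 (by simp)⟩
  · rintro ⟨i, hx, hy, hz⟩
    obtain ⟨hi, -⟩ := List.getElem?_eq_some_iff.mp hz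
    refine ⟨i, by change 3 + i ≤ l.length; omega, fun k (hk : k < 3) => ?_⟩
    interval_cases k
    · simpa using hx
    · simpa [add_comm] using hy
    · simpa [add_comm] using hz

theorem pair_infix_reverse_iff : [x, y] <:+: l.reverse ↔ [y, x] <:+: l := by
  simpa using List.reverse_infix (l₁ := [y, x]) (l₂ := l)

theorem triple_infix_reverse_iff : [x, y, z] <:+: l.reverse ↔ [z, y, x] <:+: l := by
  simpa using List.reverse_infix (l₁ := [z, y, x]) (l₂ := l)

theorem eq_of_pair_infix_of_nodup (hl : l.Nodup) (hy : [x, y] <:+: l) (hz : [x, z] <:+: l) :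
    y = z := by
  obtain ⟨i, hi, hy⟩ := pair_infix_iff_getElem?.mp hy
  obtain ⟨j, hj, hz⟩ := pair_infix_iff_getElem?.mp hz
  obtain rfl := (List.getElem?_inj (List.getElem?_eq_some_iff.mp hi).1 hl).mp (hi.trans hj.symm)
  exact Option.some_inj.mp (hy.symm.trans hz)

theorem triple_infix_of_nodup (hl : l.Nodup) (hxy : [x, y] <:+: l) (hyz : [y, z] <:+: l) :
    [x, y, z] <:+: l := by
  obtain ⟨i, hx, hi⟩ := pair_infix_iff_getElem?.mp hxy
  obtain ⟨j, hj, hz⟩ := pair_infix_iff_getElem?.mp hyz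
  obtain rfl := (List.getElem?_inj (List.getElem?_eq_some_iff.mp hi).1 hl).mp (hi.trans hj.symm)
  exact triple_infix_iff_getElem?.mpr ⟨i, hx, hi, hz⟩

theorem exists_pair_infix_of_mem (hl : 2 ≤ l.length) (hx : x ∈ l) :
    ∃ y, [x, y] <:+: l ∨ [y, x] <:+: l := by
  obtain ⟨i, hi⟩ := List.mem_iff_getElem?.mp hx
  rcases i with _ | i
  · exact ⟨l[1], Or.inl (pair_infix_iff_getElem?.mpr ⟨0, hi, List.getElem?_eq_getElem hl⟩)⟩
  · have hlt := (List.getElem?_eq_some_iff.mp hi).1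
    exact ⟨l[i], Or.inr (pair_infix_iff_getElem?.mpr
      ⟨i, List.getElem?_eq_getElem (i.lt_succ_self.trans hlt), hi⟩)⟩

theorem ncard_setOf_mem_eq_length (hl : l.Nodup) : {x | x ∈ l}.ncard = l.length := by
  classical
  rw [← List.toFinset_card_of_nodup hl, ← Set.ncard_coe_finset, List.coe_toFinset]

end Lists

section PathVertices

variable {γ : List Pt} {x y z : Pt} {i : ℕ}

theorem getElem?_eq_some_nth (hi : i < γ.length) : γ[i]? = some (nth γ i) := by
  rw [nth, List.getD_eq_getElem _ _ hi, List.getElem?_eq_getElem hi]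

theorem nth_eq_of_getElem?_eq_some (hx : γ[i]? = some x) : nth γ i = x := by
  simp [nth, hx]

theorem pair_infix_of_nth (hi : i + 1 < γ.length) : [nth γ i, nth γ (i + 1)] <:+: γ :=
  pair_infix_iff_getElem?.mpr
    ⟨i, getElem?_eq_some_nth (i.lt_succ_self.trans hi), getElem?_eq_some_nth hi⟩

theorem triple_infix_of_nth (hi : i + 2 < γ.length) :
    [nth γ i, nth γ (i + 1), nth γ (i + 2)] <:+: γ :=
  triple_infix_iff_getElem?.mpr
    ⟨i, getElem?_eq_some_nth (by omega), getElem?_eq_some_nth (by omega), getElem?_eq_some_nth hi⟩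

theorem exists_nth_of_triple_infix (h : [x, y, z] <:+: γ) :
    ∃ i, i + 2 < γ.length ∧ nth γ i = x ∧ nth γ (i + 1) = y ∧ nth γ (i + 2) = z := by
  obtain ⟨i, hx, hy, hz⟩ := triple_infix_iff_getElem?.mp h
  exact ⟨i, (List.getElem?_eq_some_iff.mp hz).1, nth_eq_of_getElem?_eq_some hx,
    nth_eq_of_getElem?_eq_some hy, nth_eq_of_getElem?_eq_some hz⟩

theorem exists_nth_of_mem (hx : x ∈ γ) : ∃ i < γ.length, nth γ i = x := by
  obtain ⟨i, hi⟩ := List.mem_iff_getElem?.mp hx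
  exact ⟨i, (List.getElem?_eq_some_iff.mp hi).1, nth_eq_of_getElem?_eq_some hi⟩

theorem pathEdges_cons_cons (x y : Pt) (l : List Pt) :
    pathEdges (x :: y :: l) = s(x, y) :: pathEdges (y :: l) := rfl

theorem mem_of_mem_pathEdges {e : Sym2 Pt} (he : e ∈ pathEdges γ) (hx : x ∈ e) : x ∈ γ := by
  obtain ⟨⟨a, b⟩, hab, rfl⟩ := List.mem_map.mp he
  rcases Sym2.mem_iff.mp hx with rfl | rfl
  · exact (List.of_mem_zip hab).1
  · exact List.mem_of_mem_tail (List.of_mem_zip hab).2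

theorem nodup_pathEdges (hγ : γ.Nodup) : (pathEdges γ).Nodup := by
  induction γ with
  | nil => exact List.nodup_nil
  | cons x l ih =>
    obtain ⟨hx, hl⟩ := List.nodup_cons.mp hγ
    rcases l with _ | ⟨y, l⟩
    · exact List.nodup_nil
    · rw [pathEdges_cons_cons, List.nodup_cons]
      exact ⟨fun h => hx (mem_of_mem_pathEdges h (Sym2.mem_mk_left x y)), ih hl⟩

end PathVertices

section Paths

variable {ε : ℝ} {G : BondGraph} {γ : List Pt} {x y z : Pt} {i j : ℕ}

theorem IsStraightPath.adj (h : IsStraightPath ε G γ) (hxy : [x, y] <:+: γ) : s(x, y) ∈ G.E :=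
  List.isChain_pair.mp (List.IsChain.infix h.2.2.1 hxy)

theorem IsStraightPath.isStraight (h : IsStraightPath ε G γ) (hxyz : [x, y, z] <:+: γ) :
    IsStraight ε G x y z := by
  obtain ⟨i, hi, rfl, rfl, rfl⟩ := exists_nth_of_triple_infix hxyz
  rw [isStraight_iff_cwAngle_mem (h.adj (pair_infix_of_nth (by omega)))
    (h.adj (pair_infix_of_nth hi))]
  exact h.2.2.2.1 i hi

theorem isStraightPath_of_infix (hlen : 2 ≤ γ.length)
    (hadj : ∀ x y, [x, y] <:+: γ → s(x, y) ∈ G.E)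
    (hstraight : ∀ x y z, [x, y, z] <:+: γ → IsStraight ε G x y z)
    (hedges : (pathEdges γ).Nodup) : IsStraightPath ε G γ := by
  refine ⟨hlen, fun x hx => ?_, ?_, fun i hi => ?_, hedges⟩
  · obtain ⟨y, hy | hy⟩ := exists_pair_infix_of_mem hlen hx
    · exact G.mem_V _ (hadj x y hy) x (Sym2.mem_mk_left x y)
    · exact G.mem_V _ (hadj y x hy) x (Sym2.mem_mk_right y x)
  · refine List.isChain_iff_forall_rel_of_append_cons_cons.mpr fun x y a b hab => hadj x y ?_
    exact ⟨a, b, by simp [hab]⟩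
  · have h := hstraight _ _ _ (triple_infix_of_nth hi)
    exact (isStraight_iff_cwAngle_mem h.1 h.2.1).mp h

theorem isStraightPath_pair (hxy : s(x, y) ∈ G.E) : IsStraightPath ε G [x, y] := by
  refine isStraightPath_of_infix le_rfl (fun a b hab => ?_) (fun a b c habc => ?_)
    (List.nodup_singleton _)
  · obtain ⟨rfl, rfl⟩ : a = x ∧ b = y := by simpa using hab.eq_of_length rfl
    exact hxy
  · simpa using habc.length_le

theorem IsStraightPath.reverse (h : IsStraightPath ε G γ) (hγ : γ.Nodup) :
    IsStraightPath ε G γ.reverse := by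
  refine isStraightPath_of_infix (by simpa using h.1) (fun x y hxy => ?_) (fun x y z hxyz => ?_)
    (nodup_pathEdges (List.nodup_reverse.mpr hγ))
  · exact Sym2.eq_swap ▸ h.adj (pair_infix_reverse_iff.mp hxy)
  · exact (h.isStraight (triple_infix_reverse_iff.mp hxyz)).symm

theorem IsStraightPath.cons (hε : ε < π) (h : IsStraightPath ε G (y :: z :: γ))
    (hγ : (y :: z :: γ).Nodup) (hx : IsStraight ε G x y z) :
    IsStraightPath ε G (x :: y :: z :: γ) := by
  refine isStraightPath_of_infix (by simp) (fun a b hab => ?_) (fun a b c habc => ?_) ?_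
  · rcases List.infix_cons_iff.mp hab with hpre | hinf
    · obtain ⟨rfl, rfl⟩ : a = x ∧ b = y := by simpa using hpre
      exact hx.1
    · exact h.adj hinf
  · rcases List.infix_cons_iff.mp habc with hpre | hinf
    · obtain ⟨rfl, rfl, rfl⟩ : a = x ∧ b = y ∧ c = z := by simpa using hpre
      exact hx
    · exact h.isStraight hinf
  · rw [pathEdges_cons_cons, List.nodup_cons]
    refine ⟨fun hmem => ?_, h.2.2.2.2⟩
    rw [pathEdges_cons_cons, List.mem_cons, Sym2.eq_swap, Sym2.congr_right] at hmem
    rcases hmem with heq | hmem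
    · exact hx.ne hε heq
    · exact (List.nodup_cons.mp hγ).1 (mem_of_mem_pathEdges hmem (Sym2.mem_mk_left y x))

theorem IsStraightPath.thetaEx_eq_sum_angle (h : IsStraightPath ε G γ) :
    thetaEx γ = ∑ i ∈ Finset.range (γ.length - 2),
      angle (nth γ (i + 1) - nth γ i) (nth γ (i + 2) - nth γ (i + 1)) := by
  refine Finset.sum_congr rfl fun i hi => ?_
  have hi : i + 2 < γ.length := by rw [Finset.mem_range] at hi; omega
  exact abs_cwAngle_sub_sub_pi (G.ne_of_mem_E (h.adj (pair_infix_of_nth (by omega))))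
    (G.ne_of_mem_E (h.adj (pair_infix_of_nth hi))).symm

theorem IsStraightPath.angle_chord_add_angle_chord_le_thetaEx (h : IsStraightPath ε G γ)
    (hij : i ≤ j) (hj : j + 1 < γ.length) :
    angle (nth γ (i + 1) - nth γ i) (nth γ (j + 1) - nth γ i) +
      angle (nth γ (j + 1) - nth γ i) (nth γ (j + 1) - nth γ j) ≤ thetaEx γ := by
  refine (angle_chord_add_angle_chord_le_sum_angle hij fun k _ hkj => ?_).trans ?_
  · exact G.ne_of_mem_E (h.adj (pair_infix_of_nth (by omega)))
  · rw [h.thetaEx_eq_sum_angle]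
    refine Finset.sum_le_sum_of_subset_of_nonneg (fun k hk => ?_) fun _ _ _ => angle_nonneg _ _
    rw [Finset.mem_Ico] at hk
    rw [Finset.mem_range]
    omega

end Paths

/-- The standing assumptions: good bond angles and small angle excess of all straight paths. -/
structure SmallExcess (ε : ℝ) (G : BondGraph) : Prop where
  lt : ε < π / 6
  goodAngles : HasGoodAngles ε G
  thetaEx_lt : ∀ γ : List Pt, IsStraightPath ε G γ → thetaEx γ < π / 2 - ε

/-! ### Maximal straight paths -/

section Maximal

variable {ε : ℝ} {G : BondGraph} {γ γ' : List Pt} {x y z q : Pt}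

theorem SmallExcess.lt_pi (H : SmallExcess ε G) : ε < π := by linarith [H.lt, Real.pi_pos]

/-- A return to a vertex has a vanishing chord, which makes an angle of `π / 2` with both end
bonds: the total turning of the path would be at least `π`. -/
theorem SmallExcess.nodup (H : SmallExcess ε G) (h : IsStraightPath ε G γ) : γ.Nodup := by
  rw [List.nodup_iff_getElem?_ne_getElem?]
  intro i j hij hj heq
  obtain ⟨j, rfl⟩ := Nat.exists_eq_add_of_lt hij
  have hnth : nth γ (i + j + 1) = nth γ i := by simp [nth, heq]
  have hpos : j ≠ 0 := by
    rintro rfl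
    exact G.ne_of_mem_E (h.adj (pair_infix_of_nth hj)) hnth.symm
  have hturn := (angle_nonneg _ _).trans
    (h.isStraight (triple_infix_of_nth (i := i) (by omega))).2.2
  have hchord := h.angle_chord_add_angle_chord_le_thetaEx (i.le_add_right j) hj
  rw [hnth, sub_self, angle_zero_right, angle_zero_left] at hchord
  linarith [H.thetaEx_lt γ h, Real.pi_pos]

theorem IsMaximalStraight.reverse (h : IsMaximalStraight ε G γ) (H : SmallExcess ε G) :
    IsMaximalStraight ε G γ.reverse := by
  refine ⟨h.1.reverse (H.nodup h.1), fun γ' hγ' hsub => ?_⟩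
  rw [List.reverse_reverse]
  refine (h.2 γ' hγ' ?_).symm
  rcases hsub with hsub | hsub
  · exact Or.inr (by simpa using List.reverse_infix.mpr hsub)
  · exact Or.inl (List.reverse_infix.mp hsub)

theorem IsMaximalStraight.not_isStraight_of_eq_cons_cons (h : IsMaximalStraight ε G γ)
    (H : SmallExcess ε G) {l : List Pt} (hγ : γ = y :: z :: l) : ¬ IsStraight ε G x y z := by
  rintro hx
  subst hγ
  have hlen := h.2 _ (h.1.cons H.lt_pi (H.nodup h.1) hx) (Or.inl (List.suffix_cons _ _).isInfix)
  rcases hlen with heq | heq <;> simpa using congrArg List.length heq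

theorem IsMaximalStraight.exists_eq_cons_of_isStraight (h : IsMaximalStraight ε G γ)
    (H : SmallExcess ε G) {b : List Pt} (hb : x :: y :: b <:+ γ) (hz : IsStraight ε G x y z) :
    ∃ b', b = z :: b' := by
  rcases b with _ | ⟨w, b⟩
  · obtain ⟨a, hγ⟩ := hb
    have hrev : γ.reverse = y :: x :: a.reverse := by simp [← hγ]
    exact absurd hz.symm ((h.reverse H).not_isStraight_of_eq_cons_cons H hrev)
  · have hw : IsStraight ε G x y w :=
      h.1.isStraight ((List.prefix_append [x, y, w] b).isInfix.trans hb.isInfix)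
    exact ⟨b, by rw [hw.unique H.goodAngles H.lt hz]⟩

theorem IsMaximalStraight.eq_of_suffix (h : IsMaximalStraight ε G γ)
    (h' : IsMaximalStraight ε G γ') (H : SmallExcess ε G) {b b' : List Pt}
    (hb : x :: y :: b <:+ γ) (hb' : x :: y :: b' <:+ γ') : b = b' := by
  induction b generalizing x y b' with
  | nil =>
    rcases b' with _ | ⟨z, b'⟩
    · rfl
    · have hz := h'.1.isStraight ((List.prefix_append [x, y, z] b').isInfix.trans hb'.isInfix)
      obtain ⟨_, hnil⟩ := h.exists_eq_cons_of_isStraight H hb hz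
      exact absurd hnil (List.cons_ne_nil _ _).symm
  | cons z b ih =>
    have hz := h.1.isStraight ((List.prefix_append [x, y, z] b).isInfix.trans hb.isInfix)
    obtain ⟨b', rfl⟩ := h'.exists_eq_cons_of_isStraight H hb' hz
    rw [ih ((List.suffix_cons _ _).trans hb) ((List.suffix_cons _ _).trans hb')]

theorem IsMaximalStraight.eq_of_pair_infix (h : IsMaximalStraight ε G γ)
    (h' : IsMaximalStraight ε G γ') (H : SmallExcess ε G) (hxy : [x, y] <:+: γ)
    (hxy' : [x, y] <:+: γ') : γ = γ' := by
  obtain ⟨a, b, hab⟩ := hxy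
  obtain ⟨a', b', hab'⟩ := hxy'
  have hb : b = b' := h.eq_of_suffix h' H (x := x) (y := y) ⟨a, by simp [← hab]⟩
    ⟨a', by simp [← hab']⟩
  have ha : a.reverse = a'.reverse := (h.reverse H).eq_of_suffix (h'.reverse H) H (x := y) (y := x)
    ⟨b.reverse, by simp [← hab]⟩ ⟨b'.reverse, by simp [← hab']⟩
  rw [← hab, ← hab', List.reverse_inj.mp ha, hb]

theorem SmallExcess.exists_isMaximalStraight (H : SmallExcess ε G) (hxy : s(x, y) ∈ G.E) :
    ∃ γ, IsMaximalStraight ε G γ ∧ [x, y] <:+: γ := by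
  let lengths : Set ℕ := List.length '' {γ | IsStraightPath ε G γ ∧ [x, y] <:+: γ}
  have hbdd : BddAbove lengths := by
    refine ⟨G.V.ncard, ?_⟩
    rintro _ ⟨γ, ⟨hγ, -⟩, rfl⟩
    rw [← ncard_setOf_mem_eq_length (H.nodup hγ)]
    exact Set.ncard_le_ncard hγ.2.1 G.finV
  have hne : lengths.Nonempty := ⟨_, [x, y], ⟨isStraightPath_pair hxy, List.infix_rfl⟩, rfl⟩
  obtain ⟨_, ⟨γ, ⟨hγ, hxyγ⟩, rfl⟩, hmax⟩ := hbdd.exists_isGreatest_of_nonempty hne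
  have heq {γ' : List Pt} (hγ' : IsStraightPath ε G γ') (hsub : γ <:+: γ') : γ = γ' :=
    hsub.eq_of_length_le (hmax ⟨γ', ⟨hγ', hxyγ.trans hsub⟩, rfl⟩)
  refine ⟨γ, ⟨hγ, fun γ' hγ' hsub => ?_⟩, hxyγ⟩
  rcases hsub with hsub | hsub
  · exact Or.inl (heq hγ' hsub).symm
  · exact Or.inr (List.reverse_eq_iff.mp (heq (hγ'.reverse (H.nodup hγ')) hsub).symm)

theorem mk_eq_mk_iff :
    Quotient.mk revSetoid γ = Quotient.mk revSetoid γ' ↔ γ = γ' ∨ γ = γ'.reverse :=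
  Quotient.eq

theorem mk_reverse : Quotient.mk revSetoid γ.reverse = Quotient.mk revSetoid γ :=
  mk_eq_mk_iff.mpr (Or.inr rfl)

theorem IsMaximalStraight.mk_eq_mk_iff_aligned (h : IsMaximalStraight ε G γ)
    (h' : IsMaximalStraight ε G γ') (H : SmallExcess ε G) (hy : [x, y] <:+: γ)
    (hz : [x, z] <:+: γ') :
    Quotient.mk revSetoid γ = Quotient.mk revSetoid γ' ↔ Aligned ε G x y z := by
  rw [mk_eq_mk_iff]
  constructor
  · rintro (rfl | rfl)
    · exact Or.inl (eq_of_pair_infix_of_nodup (H.nodup h.1) hy hz)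
    · exact Or.inr (h'.1.isStraight
        (triple_infix_of_nodup (H.nodup h'.1) (pair_infix_reverse_iff.mp hy) hz))
  · rintro (rfl | hyz)
    · exact Or.inl (h.eq_of_pair_infix h' H hy hz)
    · obtain ⟨a, b, hab⟩ := pair_infix_reverse_iff.mpr hy
      obtain ⟨b, rfl⟩ := (h.reverse H).exists_eq_cons_of_isStraight H (b := b)
        ⟨a, by simp [← hab]⟩ hyz
      have hz' : [x, z] <:+: γ.reverse := ⟨a ++ [y], b, by simp [← hab]⟩
      exact Or.inr (List.reverse_eq_iff.mp ((h.reverse H).eq_of_pair_infix h' H hz' hz))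

theorem SmallExcess.exists_chord_of_lt {i j : ℕ} (H : SmallExcess ε G) (h : IsStraightPath ε G γ)
    (hij : i < j) (hj : j < γ.length) :
    ∃ y p, [nth γ i, y] <:+: γ ∧ [p, nth γ j] <:+: γ ∧
      angle (y - nth γ i) (nth γ j - nth γ i) + angle (nth γ j - nth γ i) (nth γ j - p) <
        π / 2 - ε := by
  obtain ⟨k, rfl⟩ := Nat.exists_eq_add_of_lt hij
  exact ⟨_, _, pair_infix_of_nth (by omega), pair_infix_of_nth hj,
    (h.angle_chord_add_angle_chord_le_thetaEx (i.le_add_right k) hj).trans_lt (H.thetaEx_lt γ h)⟩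

theorem IsMaximalStraight.exists_chord (h : IsMaximalStraight ε G γ) (H : SmallExcess ε G)
    (hx : x ∈ γ) (hq : q ∈ γ) (hne : x ≠ q) :
    ∃ δ, IsMaximalStraight ε G δ ∧ Quotient.mk revSetoid δ = Quotient.mk revSetoid γ ∧
      ∃ y p, [x, y] <:+: δ ∧ [p, q] <:+: δ ∧
        angle (y - x) (q - x) + angle (q - x) (q - p) < π / 2 - ε := by
  obtain ⟨i, hi, rfl⟩ := exists_nth_of_mem hx
  obtain ⟨j, hj, rfl⟩ := exists_nth_of_mem hq
  rcases lt_or_gt_of_ne (ne_of_apply_ne (nth γ) hne) with hij | hij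
  · exact ⟨γ, h, rfl, H.exists_chord_of_lt h.1 hij hj⟩
  · obtain ⟨y, p, hy, hp, hsum⟩ := H.exists_chord_of_lt h.1 hij hi
    refine ⟨γ.reverse, h.reverse H, mk_reverse, p, y, pair_infix_reverse_iff.mpr hp,
      pair_infix_reverse_iff.mpr hy, ?_⟩
    rwa [add_comm, angle_sub_sub_rev _ (nth γ i), angle_sub_sub_rev p]

/-- The bonds in which the two paths leave `x` and enter `q` enclose with the chord from `x` to `q`
angles of total size less than `π - 2ε`, whereas different bonds at a vertex enclose an angle of at
least `π / 2 - ε`. Hence the paths leave `x` or enter `q` along the same bond. -/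
theorem IsMaximalStraight.mk_eq_mk_of_mem (h : IsMaximalStraight ε G γ)
    (h' : IsMaximalStraight ε G γ') (H : SmallExcess ε G) (hne : x ≠ q) (hx : x ∈ γ) (hq : q ∈ γ)
    (hx' : x ∈ γ') (hq' : q ∈ γ') :
    Quotient.mk revSetoid γ = Quotient.mk revSetoid γ' := by
  obtain ⟨δ, hδ, hδγ, y, p, hy, hp, hsum⟩ := h.exists_chord H hx hq hne
  obtain ⟨δ', hδ', hδγ', y', p', hy', hp', hsum'⟩ := h'.exists_chord H hx' hq' hne
  rw [← hδγ, ← hδγ']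
  by_cases hyy : y = y'
  · subst hyy
    rw [hδ.eq_of_pair_infix hδ' H hy hy']
  by_cases hpp : p = p'
  · subst hpp
    rw [hδ.eq_of_pair_infix hδ' H hp hp']
  have hangle_x : π / 2 - ε ≤ angle (y - x) (q - x) + angle (q - x) (y' - x) :=
    (H.goodAngles.le_angle (hδ.1.adj hy) (hδ'.1.adj hy') hyy).trans
      (angle_le_angle_add_angle _ _ _)
  have hangle_q : π / 2 - ε ≤ angle (q - p) (q - x) + angle (q - x) (q - p') := by
    refine (H.goodAngles.le_angle (Sym2.eq_swap ▸ hδ.1.adj hp) (Sym2.eq_swap ▸ hδ'.1.adj hp')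
      hpp).trans ?_
    rw [← angle_neg_neg, neg_sub, neg_sub]
    exact angle_le_angle_add_angle _ _ _
  rw [angle_comm (q - x) (y' - x)] at hangle_x
  rw [angle_comm (q - p) (q - x)] at hangle_q
  linarith

end Maximal

/-! ### Strata through a vertex -/

/-- The strata through the vertex `x`. -/
def strataAt (ε : ℝ) (G : BondGraph) (x : Pt) : Set (Stratum × Fin 2) :=
  {p | p ∈ strataSet ε G ∧ x ∈ Stratum.verts p.1}

/-- The strata through `x` that contain a bond at `x`. -/
def bondStrata (ε : ℝ) (G : BondGraph) (x : Pt) : Set (Stratum × Fin 2) :=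
  {p | ∃ γ y, IsMaximalStraight ε G γ ∧ [x, y] <:+: γ ∧ p = (Quotient.mk revSetoid γ, 0)}

/-- The degenerate one-point strata at `x`, with their multiplicity. -/
def degenerateStrata (ε : ℝ) (G : BondGraph) (x : Pt) : Set (Stratum × Fin 2) :=
  {p | deg G x = 0 ∧ (p = (Quotient.mk revSetoid [x], 0) ∨ p = (Quotient.mk revSetoid [x], 1))} ∪
    {p | (deg G x = 1 ∨ V2pi ε G x) ∧ p = (Quotient.mk revSetoid [x], 0)}

section Strata

variable {ε : ℝ} {G : BondGraph} {x y z : Pt} {p q : Stratum × Fin 2}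

theorem exists_eq_mk_of_mem_strataSet (hp : p ∈ strataSet ε G) :
    (∃ γ, IsMaximalStraight ε G γ ∧ p = (Quotient.mk revSetoid γ, 0)) ∨
      ∃ x ∈ G.V, ∃ i, p = (Quotient.mk revSetoid [x], i) := by
  rcases hp with (hp | ⟨x, hx, -, hp | hp⟩) | ⟨x, hx, -, hp⟩
  · exact Or.inl hp
  all_goals exact Or.inr ⟨x, hx, _, hp⟩

theorem verts_subset_of_mem_strataSet (hp : p ∈ strataSet ε G) : Stratum.verts p.1 ⊆ G.V := by
  rcases exists_eq_mk_of_mem_strataSet hp with ⟨γ, hγ, rfl⟩ | ⟨x, hx, i, rfl⟩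
  · exact hγ.1.2.1
  · rintro y hy
    exact List.mem_singleton.mp hy ▸ hx

theorem SmallExcess.ncard_verts (H : SmallExcess ε G) (hp : p ∈ strataSet ε G) :
    (Stratum.verts p.1).ncard = Stratum.len p.1 := by
  rcases exists_eq_mk_of_mem_strataSet hp with ⟨γ, hγ, rfl⟩ | ⟨x, -, i, rfl⟩
  · exact ncard_setOf_mem_eq_length (H.nodup hγ.1)
  · exact ncard_setOf_mem_eq_length (List.nodup_singleton x)

theorem SmallExcess.eq_of_mem_strataAt (H : SmallExcess ε G) (hp : p ∈ strataAt ε G x)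
    (hp' : p ∈ strataAt ε G y) (hq : q ∈ strataAt ε G x) (hq' : q ∈ strataAt ε G y) (hxy : x ≠ y) :
    p = q := by
  rcases exists_eq_mk_of_mem_strataSet hp.1 with ⟨γ, hγ, rfl⟩ | ⟨v, -, i, rfl⟩
  · rcases exists_eq_mk_of_mem_strataSet hq.1 with ⟨δ, hδ, rfl⟩ | ⟨v, -, i, rfl⟩
    · rw [hγ.mk_eq_mk_of_mem hδ H hxy hp.2 hp'.2 hq.2 hq'.2]
    · exact absurd ((List.mem_singleton.mp hq.2).trans (List.mem_singleton.mp hq'.2).symm) hxy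
  · exact absurd ((List.mem_singleton.mp hp.2).trans (List.mem_singleton.mp hp'.2).symm) hxy

theorem SmallExcess.strataAt_eq_union (H : SmallExcess ε G) (hx : x ∈ G.V) :
    strataAt ε G x = bondStrata ε G x ∪ degenerateStrata ε G x := by
  ext p
  constructor
  · rintro ⟨(⟨γ, hγ, rfl⟩ | ⟨v, -, hdeg, hp⟩) | ⟨v, -, hdeg, rfl⟩, hxp⟩
    · obtain ⟨y, hy | hy⟩ := exists_pair_infix_of_mem hγ.1.1 hxp
      · exact Or.inl ⟨γ, y, hγ, hy, rfl⟩
      · exact Or.inl ⟨γ.reverse, y, hγ.reverse H, pair_infix_reverse_iff.mpr hy,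
          by rw [mk_reverse]⟩
    · obtain rfl : x = v := by rcases hp with rfl | rfl <;> exact List.mem_singleton.mp hxp
      exact Or.inr (Or.inl ⟨hdeg, hp⟩)
    · obtain rfl := List.mem_singleton.mp hxp
      exact Or.inr (Or.inr ⟨hdeg, rfl⟩)
  · rintro (⟨γ, y, hγ, hxy, rfl⟩ | ⟨hdeg, hp⟩ | ⟨hdeg, rfl⟩)
    · exact ⟨Or.inl (Or.inl ⟨γ, hγ, rfl⟩), hxy.subset List.mem_cons_self⟩
    · refine ⟨Or.inl (Or.inr ⟨x, hx, hdeg, hp⟩), ?_⟩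
      rcases hp with rfl | rfl <;> exact List.mem_singleton_self x
    · exact ⟨Or.inr ⟨x, hx, hdeg, rfl⟩, List.mem_singleton_self x⟩

theorem disjoint_bondStrata_degenerateStrata :
    Disjoint (bondStrata ε G x) (degenerateStrata ε G x) := by
  rw [Set.disjoint_left]
  rintro _ ⟨γ, y, hγ, -, rfl⟩ hdeg
  have hmk : Quotient.mk revSetoid γ = Quotient.mk revSetoid [x] := by
    rcases hdeg with ⟨-, hp | hp⟩ | ⟨-, hp⟩ <;> exact congrArg Prod.fst hp
  have hlen : γ.length = 1 := congrArg Stratum.len hmk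
  exact absurd hγ.1.1 (by omega)

theorem SmallExcess.exists_bondStrata_eq_image (H : SmallExcess ε G) (x : Pt) :
    ∃ f : Pt → Stratum × Fin 2, bondStrata ε G x = f '' nbhd G x ∧
      ∀ y ∈ nbhd G x, ∀ z ∈ nbhd G x, f y = f z ↔ Aligned ε G x y z := by
  have hγ : ∀ y ∈ nbhd G x, ∃ γ, IsMaximalStraight ε G γ ∧ [x, y] <:+: γ :=
    fun y hy => H.exists_isMaximalStraight hy
  choose! γ hγ hxy using hγ
  refine ⟨fun y => (Quotient.mk revSetoid (γ y), 0), ?_, fun y hy z hz => ?_⟩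
  · ext p
    constructor
    · rintro ⟨δ, y, hδ, hy, rfl⟩
      have hyx : y ∈ nbhd G x := hδ.1.adj hy
      obtain rfl := (hγ y hyx).eq_of_pair_infix hδ H (hxy y hyx) hy
      exact ⟨y, hyx, rfl⟩
    · rintro ⟨y, hy, rfl⟩
      exact ⟨γ y, y, hγ y hy, hxy y hy, rfl⟩
  · rw [← (hγ y hy).mk_eq_mk_iff_aligned (hγ z hz) H (hxy y hy) (hxy z hz)]
    exact Prod.mk_left_inj

theorem deg_eq_zero_iff : deg G x = 0 ↔ nbhd G x = ∅ :=
  Set.ncard_eq_zero (G.finV.subset fun _ hy => G.mem_V _ hy _ (Sym2.mem_mk_right _ _))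

theorem SmallExcess.v2pi_iff_exists_isStraight (H : SmallExcess ε G) :
    V2pi ε G x ↔ ∃ y z, IsStraight ε G y x z ∧ nbhd G x = {y, z} := by
  constructor
  · rintro ⟨-, y, z, -, hnbhd, hangle⟩
    have hy : y ∈ nbhd G x := by simp [hnbhd]
    have hz : z ∈ nbhd G x := by simp [hnbhd]
    exact ⟨z, y, (isStraight_iff_cwAngle_mem (Sym2.eq_swap ▸ hz) hy).mpr hangle,
      hnbhd.trans (Set.pair_comm y z)⟩
  · rintro ⟨y, z, h, hnbhd⟩
    exact ⟨G.mem_V _ h.1 _ (Sym2.mem_mk_right y x), z, y, (h.ne H.lt_pi).symm,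
      hnbhd.trans (Set.pair_comm y z), (isStraight_iff_cwAngle_mem h.1 h.2.1).mp h⟩

theorem SmallExcess.deg_eq_one_or_v2pi_iff (H : SmallExcess ε G) :
    deg G x = 1 ∨ V2pi ε G x ↔ ∃ y ∈ nbhd G x, ∀ z ∈ nbhd G x, Aligned ε G x y z := by
  rw [H.v2pi_iff_exists_isStraight, deg, Set.ncard_eq_one]
  constructor
  · rintro (⟨y, hy⟩ | ⟨y, z, hyz, hnbhd⟩)
    · exact ⟨y, by simp [hy], fun z hz => Or.inl (by simpa [hy, eq_comm] using hz)⟩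
    · refine ⟨y, by simp [hnbhd], fun w hw => ?_⟩
      rw [hnbhd] at hw
      rcases hw with rfl | rfl
      · exact Or.inl rfl
      · exact Or.inr hyz
  · rintro ⟨y, hy, hall⟩
    by_cases hone : ∀ z ∈ nbhd G x, z = y
    · exact Or.inl ⟨y, Set.eq_singleton_iff_unique_mem.mpr ⟨hy, hone⟩⟩
    · push Not at hone
      obtain ⟨z, hz, hzy⟩ := hone
      have hyz := (hall z hz).resolve_left hzy.symm
      refine Or.inr ⟨y, z, hyz, Set.Subset.antisymm (fun w hw => ?_) ?_⟩
      · exact (hall w hw).imp Eq.symm fun hyw => hyw.unique H.goodAngles H.lt hyz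
      · exact Set.pair_subset hy hz

theorem SmallExcess.encard_bondStrata_of_aligned (H : SmallExcess ε G) (hy : y ∈ nbhd G x)
    (h : ∀ z ∈ nbhd G x, Aligned ε G x y z) : (bondStrata ε G x).encard = 1 := by
  obtain ⟨f, hf, hiff⟩ := H.exists_bondStrata_eq_image x
  rw [Set.encard_eq_one]
  refine ⟨f y, Set.eq_singleton_iff_unique_mem.mpr ⟨hf ▸ Set.mem_image_of_mem f hy, ?_⟩⟩
  rw [hf, Set.forall_mem_image]
  exact fun z hz => ((hiff y hy z hz).mpr (h z hz)).symm

theorem SmallExcess.encard_bondStrata_of_not_aligned (H : SmallExcess ε G) (hy : y ∈ nbhd G x)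
    (hz : z ∈ nbhd G x) (h : ¬ Aligned ε G x y z) : (bondStrata ε G x).encard = 2 := by
  obtain ⟨f, hf, hiff⟩ := H.exists_bondStrata_eq_image x
  rw [Set.encard_eq_two]
  refine ⟨f y, f z, mt (hiff y hy z hz).mp h, hf ▸ Set.Subset.antisymm ?_ ?_⟩
  · rw [Set.image_subset_iff]
    intro w hw
    rcases H.goodAngles.aligned_or_aligned_or_aligned H.lt hy hz hw with hyz | hyw | hzw
    · exact absurd hyz h
    · exact Or.inl ((hiff y hy w hw).mpr hyw).symm
    · exact Or.inr ((hiff z hz w hw).mpr hzw).symm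
  · exact Set.pair_subset (Set.mem_image_of_mem f hy) (Set.mem_image_of_mem f hz)

theorem encard_degenerateStrata_of_deg_eq_zero (h : deg G x = 0) :
    (degenerateStrata ε G x).encard = 2 := by
  rw [Set.encard_eq_two]
  refine ⟨_, _, fun heq => zero_ne_one (congrArg Prod.snd heq), Set.Subset.antisymm ?_ fun p hp =>
    Or.inl ⟨h, hp⟩⟩
  rintro p (⟨-, hp⟩ | ⟨-, hp⟩)
  · exact hp
  · exact Or.inl hp

theorem encard_degenerateStrata_of_deg_ne_zero (h₀ : deg G x ≠ 0) (h : deg G x = 1 ∨ V2pi ε G x) :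
    (degenerateStrata ε G x).encard = 1 := by
  rw [Set.encard_eq_one]
  exact ⟨_, Set.Subset.antisymm
    (Set.union_subset (fun _ hp => absurd hp.1 h₀) fun _ hp => hp.2) fun _ hp => Or.inr ⟨h, hp⟩⟩

theorem degenerateStrata_eq_empty (h₀ : deg G x ≠ 0) (h : ¬ (deg G x = 1 ∨ V2pi ε G x)) :
    degenerateStrata ε G x = ∅ :=
  Set.subset_empty_iff.mp
    (Set.union_subset (fun _ hp => absurd hp.1 h₀) fun _ hp => absurd hp.1 h)

theorem SmallExcess.encard_strataAt (H : SmallExcess ε G) (hx : x ∈ G.V) :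
    (strataAt ε G x).encard = 2 := by
  rw [H.strataAt_eq_union hx, Set.encard_union_eq disjoint_bondStrata_degenerateStrata]
  by_cases h₀ : deg G x = 0
  · obtain ⟨f, hf, -⟩ := H.exists_bondStrata_eq_image x
    rw [hf, deg_eq_zero_iff.mp h₀, Set.image_empty, Set.encard_empty,
      encard_degenerateStrata_of_deg_eq_zero h₀, zero_add]
  by_cases h₁ : deg G x = 1 ∨ V2pi ε G x
  · obtain ⟨y, hy, hall⟩ := H.deg_eq_one_or_v2pi_iff.mp h₁
    rw [H.encard_bondStrata_of_aligned hy hall, encard_degenerateStrata_of_deg_ne_zero h₀ h₁,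
      one_add_one_eq_two]
  · obtain ⟨y, hy⟩ := Set.nonempty_iff_ne_empty.mpr (mt deg_eq_zero_iff.mpr h₀)
    have hcross := mt H.deg_eq_one_or_v2pi_iff.mpr h₁
    push Not at hcross
    obtain ⟨z, hz, hyz⟩ := hcross y hy
    rw [H.encard_bondStrata_of_not_aligned hy hz hyz, degenerateStrata_eq_empty h₀ h₁,
      Set.encard_empty, add_zero]

theorem SmallExcess.existsUnique_mem_strataAt (H : SmallExcess ε G) (hp : p ∈ strataAt ε G x) :
    ∃! q, q ∈ strataAt ε G x ∧ q ≠ p := by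
  have hx : x ∈ G.V := verts_subset_of_mem_strataSet hp.1 hp.2
  have hcard : (strataAt ε G x \ {p}).encard = 1 := by
    rw [Set.encard_sdiff_singleton_of_mem hp, H.encard_strataAt hx]
    rfl
  obtain ⟨q, hq⟩ := Set.encard_eq_one.mp hcard
  exact ⟨q, Set.eq_singleton_iff_unique_mem.mp hq⟩

end Strata

theorem card_orth_strata_general (ε : ℝ) (hε : ε < π / 6) (G : BondGraph)
    (hangle : HasGoodAngles ε G)
    (hex : ∀ γ : List Pt, IsStraightPath ε G γ → thetaEx γ < π / 2 - ε) :
    ∀ s ∈ strataSet ε G, (orthStrata ε G s).ncard = Stratum.len s.1 := by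
  intro s hs
  have H : SmallExcess ε G := ⟨hε, hangle, hex⟩
  have hother : ∀ x ∈ Stratum.verts s.1, ∃! p, p ∈ strataAt ε G x ∧ p ≠ s :=
    fun x hx => H.existsUnique_mem_strataAt ⟨hs, hx⟩
  choose f hf huniq using hother
  rw [← H.ncard_verts hs, eq_comm]
  refine Set.ncard_congr f (fun x hx => ?_) (fun x y hx hy hxy => ?_) fun p hp => ?_
  · exact ⟨(hf x hx).1.1, (hf x hx).2, x, hx, (hf x hx).1.2⟩
  · by_contra hne
    exact (hf x hx).2 (H.eq_of_mem_strataAt (hf x hx).1 (hxy ▸ (hf y hy).1) ⟨hs, hx⟩ ⟨hs, hy⟩ hne)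
  · obtain ⟨hp, hps, x, hx, hxp⟩ := hp
    exact ⟨x, hx, (huniq x hx p ⟨⟨hp, hxp⟩, hps⟩).symm⟩

/-- **Lemma (small angle excess, (ii)).** If every straight path has angle excess less than
`π/2 − ε`, then `#S^⊥(s) = l(s)` for every stratum `s`. -/
theorem card_orth_strata (ε : ℝ) (hε0 : 0 < ε) (hε : ε < π / 6)
    (G : BondGraph) (hreg : EpsRegular ε G)
    (hex : ∀ γ : List Pt, IsStraightPath ε G γ → thetaEx γ < π / 2 - ε) :
    ∀ s ∈ strataSet ε G, (orthStrata ε G s).ncard = Stratum.len s.1 := by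
  exact card_orth_strata_general ε hε G hreg.2 hex

end
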